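/- arXiv:1911.06702 — 5 statements merged into one kernel-verified Lean document; each statement's English description precedes it below -/
import Mathlib

section
/- Let B be a Banach space and let q : B → B be a continuous map with q(0) = 0 such that for some constant K > 0 one has ‖q(x₁) − q(x₂)‖ ≤ K(‖x₁‖ + ‖x₂‖)·‖x₁ − x₂‖ for all x₁, x₂ ∈ B. Then for every y ∈ B with ‖y‖ < 1/(10K) there exists a unique x ∈ B with ‖x‖ ≤ 1/(5K) such that x + q(x) = y. -/
/-!
Solutions of `x + q x = y` are the fixed points of `f x = y - q x`. On the closed ball of radius
`r = 1 / (5 * K)` the quadratic estimate makes `q` Lipschitz with constant `2 * K * r = 2 / 5 < 1`,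
and, since `q 0 = 0`, gives `‖q x‖ ≤ K * r ^ 2 = r / 5` there. As `‖y‖ < r / 2`, the map `f` sends
this complete ball into itself and is contracting on it, so the Banach fixed-point theorem
(`ContractingWith.exists_fixedPoint'`) gives existence, and the Lipschitz estimate uniqueness.
-/

/-- Donaldson–Kronheimer fixed-point lemma: for a continuous quadratic map `q` on a Banach
space with `q 0 = 0` and `‖q x₁ - q x₂‖ ≤ K (‖x₁‖ + ‖x₂‖) ‖x₁ - x₂‖`, every `y` with
`‖y‖ < 1/(10K)` admits a unique `x` with `‖x‖ ≤ 1/(5K)` solving `x + q x = y`. -/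
theorem fixed_point_lemma
    {B : Type*} [NormedAddCommGroup B] [NormedSpace ℝ B] [CompleteSpace B]
    (q : B → B) (hq_cont : Continuous q) (hq0 : q 0 = 0)
    (K : ℝ) (hK : 0 < K)
    (hq : ∀ x₁ x₂ : B, ‖q x₁ - q x₂‖ ≤ K * (‖x₁‖ + ‖x₂‖) * ‖x₁ - x₂‖)
    (y : B) (hy : ‖y‖ < 1 / (10 * K)) :
    ∃! x : B, ‖x‖ ≤ 1 / (5 * K) ∧ x + q x = y := by
  set r : ℝ := 1 / (5 * K) with hr
  have hr0 : 0 < r := by positivity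
  have hKr : K * r = 1 / 5 := by rw [hr]; field_simp
  have hyr : ‖y‖ < r / 2 := by
    have h : 1 / (10 * K) = r / 2 := by rw [hr]; field_simp; norm_num
    rwa [h] at hy
  have hlip : ∀ x₁ x₂ : B, ‖x₁‖ ≤ r → ‖x₂‖ ≤ r → ‖q x₁ - q x₂‖ ≤ 2 / 5 * ‖x₁ - x₂‖ := by
    intro x₁ x₂ h₁ h₂
    refine (hq x₁ x₂).trans (mul_le_mul_of_nonneg_right ?_ (norm_nonneg _))
    nlinarith
  have hbound : ∀ x : B, ‖x‖ ≤ r → ‖q x‖ ≤ r / 5 := by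
    intro x hx
    have h := hq x 0
    simp only [hq0, sub_zero, norm_zero, add_zero] at h
    have h1 : K * ‖x‖ ≤ 1 / 5 := by nlinarith
    nlinarith [norm_nonneg x]
  have hmaps : Set.MapsTo (fun x => y - q x) (Metric.closedBall (0 : B) r)
      (Metric.closedBall (0 : B) r) := by
    intro x hx
    rw [mem_closedBall_zero_iff] at hx ⊢
    linarith [norm_sub_le y (q x), hbound x hx]
  have hcontr : ContractingWith (2 / 5 : NNReal) (hmaps.restrict _ _ _) := by
    refine ⟨?_, LipschitzWith.of_dist_le_mul ?_⟩
    · rw [← NNReal.coe_lt_coe]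
      norm_num
    · rintro ⟨x₁, h₁⟩ ⟨x₂, h₂⟩
      rw [mem_closedBall_zero_iff] at h₁ h₂
      change dist (y - q x₁) (y - q x₂) ≤ ((2 / 5 : NNReal) : ℝ) * dist x₁ x₂
      rw [dist_sub_left, dist_eq_norm, dist_eq_norm]
      simpa using hlip x₁ x₂ h₁ h₂
  obtain ⟨x, hxs, hfix, -⟩ := hcontr.exists_fixedPoint' Metric.isClosed_closedBall.isComplete hmaps
    (Metric.mem_closedBall_self hr0.le) (edist_ne_top _ _)
  have hx : ‖x‖ ≤ r := mem_closedBall_zero_iff.mp hxs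
  have hxy : x + q x = y := (eq_sub_iff_add_eq.mp hfix.eq.symm)
  refine ⟨x, ⟨hx, hxy⟩, ?_⟩
  rintro z ⟨hz, hzy⟩
  have hsub : z - x = q x - q z := by
    rw [sub_eq_sub_iff_add_eq_add, hzy, add_comm, hxy]
  have h := hlip x z hx hz
  rw [← hsub, norm_sub_rev x z] at h
  have h0 : ‖z - x‖ = 0 := by linarith [norm_nonneg (z - x)]
  exact sub_eq_zero.mp (norm_eq_zero.mp h0)
end

section
/- Let B be a Banach space and let q : B → B be a continuous map with q(0) = 0 such that for some constant K > 0 one has ‖q(x₁) − q(x₂)‖ ≤ K(‖x₁‖ + ‖x₂‖)·‖x₁ − x₂‖ for all x₁, x₂ ∈ B. If y ∈ B satisfies ‖y‖ < 1/(10K) and x ∈ B satisfies x + q(x) = y together with ‖x‖ ≤ 1/(5K), then ‖x‖ ≤ 2‖y‖. -/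
/-- If `x + q x = y` with `‖x‖ ≤ 1/(5K)` and `‖y‖ < 1/(10K)`, then `‖x‖ ≤ 2‖y‖`. -/
theorem solution_norm_bound
    {B : Type*} [NormedAddCommGroup B] [NormedSpace ℝ B] [CompleteSpace B]
    (q : B → B) (hq_cont : Continuous q) (hq0 : q 0 = 0)
    (K : ℝ) (hK : 0 < K)
    (hq : ∀ x₁ x₂ : B, ‖q x₁ - q x₂‖ ≤ K * (‖x₁‖ + ‖x₂‖) * ‖x₁ - x₂‖)
    (y : B) (hy : ‖y‖ < 1 / (10 * K))
    (x : B) (hsol : x + q x = y) (hx : ‖x‖ ≤ 1 / (5 * K)) :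
    ‖x‖ ≤ 2 * ‖y‖ := by
  -- comparing with `q 0 = 0` gives `‖q x‖ ≤ K‖x‖² ≤ ‖x‖/5`, so `‖x‖ ≤ ‖y‖ + ‖x‖/5`
  have hqx : ‖q x‖ ≤ K * ‖x‖ * ‖x‖ := by simpa [hq0] using hq x 0
  have hKx : K * ‖x‖ ≤ 1 / 5 := by
    calc K * ‖x‖ ≤ K * (1 / (5 * K)) := by gcongr
      _ = 1 / 5 := by field_simp
  have hqx' : ‖q x‖ ≤ 1 / 5 * ‖x‖ :=
    hqx.trans (mul_le_mul_of_nonneg_right hKx (norm_nonneg x))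
  have htri : ‖x‖ ≤ ‖y‖ + ‖q x‖ := by
    calc ‖x‖ = ‖y - q x‖ := congrArg norm (eq_sub_of_add_eq hsol)
      _ ≤ ‖y‖ + ‖q x‖ := norm_sub_le y (q x)
  linarith [norm_nonneg y]
end

section
/- Let B be a Banach space and let q : B → B be a continuous map with q(0) = 0 such that for some constant K > 0 one has ‖q(x₁) − q(x₂)‖ ≤ K(‖x₁‖ + ‖x₂‖)·‖x₁ − x₂‖ for all x₁, x₂ ∈ B. Fix y ∈ B with ‖y‖ < 1/(10K) and define the iteration x₀ = 0 and x_{n+1} = y − q(x_n) for n ≥ 0. Then the sequence (x_n) converges in B, and its limit x satisfies x + q(x) = y and ‖x‖ ≤ 1/(5K). -/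
/-!
On the closed ball of radius `1/(5K)` the estimate on `q` gives the Lipschitz constant
`K * (2/(5K)) = 2/5`, and `‖q z‖ ≤ K * ‖z‖ ^ 2 ≤ 1/(25K)`, so `z ↦ y - q z` maps this ball into
itself because `1/(10K) + 1/(25K) < 1/(5K)`. Hence the iterates stay in the ball, successive
differences decay like `(2/5) ^ n`, and the sequence is Cauchy. Continuity of `q` identifies the
limit as a fixed point, and closedness of the ball bounds it.
-/

/-- The iteration `x₀ = 0`, `x_{n+1} = y - q (x_n)` converges, and its limit `x` satisfies
`x + q x = y` and `‖x‖ ≤ 1/(5K)`, whenever `‖y‖ < 1/(10K)`. -/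
theorem iteration_converges
    {B : Type*} [NormedAddCommGroup B] [NormedSpace ℝ B] [CompleteSpace B]
    (q : B → B) (hq_cont : Continuous q) (hq0 : q 0 = 0)
    (K : ℝ) (hK : 0 < K)
    (hq : ∀ x₁ x₂ : B, ‖q x₁ - q x₂‖ ≤ K * (‖x₁‖ + ‖x₂‖) * ‖x₁ - x₂‖)
    (y : B) (hy : ‖y‖ < 1 / (10 * K))
    (x : ℕ → B) (hx0 : x 0 = 0) (hxs : ∀ n : ℕ, x (n + 1) = y - q (x n)) :
    ∃ l : B, Filter.Tendsto x Filter.atTop (nhds l) ∧ l + q l = y ∧ ‖l‖ ≤ 1 / (5 * K) := by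
  obtain ⟨r, hr⟩ : ∃ r : ℝ, r = 1 / (5 * K) := ⟨_, rfl⟩
  have hr0 : 0 < r := by rw [hr]; positivity
  have hKr : K * r = 1 / 5 := by rw [hr]; field_simp
  have hyr : ‖y‖ < r / 2 := by
    have h : r / 2 = 1 / (10 * K) := by rw [hr]; field_simp; norm_num
    rwa [h]
  rw [← hr]
  have hball : ∀ n, ‖x n‖ ≤ r := by
    intro n
    induction n with
    | zero => simpa [hx0] using hr0.le
    | succ n ih =>
      have h1 : ‖q (x n)‖ ≤ K * ‖x n‖ * ‖x n‖ := by simpa [hq0] using hq (x n) 0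
      have h2 : K * ‖x n‖ * ‖x n‖ ≤ K * r * r := by gcongr
      rw [hKr] at h2
      rw [hxs]
      linarith [norm_sub_le y (q (x n))]
  have hstep : ∀ n, dist (x n) (x (n + 1)) ≤ r * (2 / 5) ^ n := by
    intro n
    induction n with
    | zero => simpa [hx0] using hball 1
    | succ n ih =>
      have h1 : dist (x (n + 1)) (x (n + 1 + 1)) = ‖q (x n) - q (x (n + 1))‖ := by
        rw [hxs (n + 1), hxs n, dist_sub_left, dist_eq_norm]
      have h2 : K * (‖x n‖ + ‖x (n + 1)‖) ≤ 2 / 5 := by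
        have h3 : K * (‖x n‖ + ‖x (n + 1)‖) ≤ K * (r + r) := by
          gcongr <;> exact hball _
        linarith
      rw [dist_eq_norm] at ih
      calc dist (x (n + 1)) (x (n + 1 + 1))
          ≤ K * (‖x n‖ + ‖x (n + 1)‖) * ‖x n - x (n + 1)‖ := h1 ▸ hq _ _
        _ ≤ 2 / 5 * (r * (2 / 5) ^ n) := by gcongr
        _ = r * (2 / 5) ^ (n + 1) := by ring
  obtain ⟨l, hl⟩ := cauchySeq_tendsto_of_complete
    (cauchySeq_of_le_geometric (2 / 5) r (by norm_num) hstep)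
  refine ⟨l, hl, ?_, le_of_tendsto' hl.norm hball⟩
  have h1 : Filter.Tendsto (fun n => x (n + 1)) Filter.atTop (nhds (y - q l)) := by
    simp only [hxs]
    exact tendsto_const_nhds.sub ((hq_cont.tendsto l).comp hl)
  have h2 : l = y - q l :=
    tendsto_nhds_unique (hl.comp (Filter.tendsto_add_atTop_nat 1)) h1
  exact eq_sub_iff_add_eq.mp h2
end

section
/- Let B be a Banach space and let q : B → B be a continuous map with q(0) = 0 such that for some constant K > 0 one has ‖q(x₁) − q(x₂)‖ ≤ K(‖x₁‖ + ‖x₂‖)·‖x₁ − x₂‖ for all x₁, x₂ ∈ B. Set C := max(4K, 1). Fix y ∈ B with ‖y‖ ≤ 1/(2C) and define x₀ = 0 and x_{n+1} = y − q(x_n) for n ≥ 0. Then for every k ≥ 1 one has ‖x_k − x_{k−1}‖ ≤ C^{k−1}·‖y‖^k. -/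
/-! All iterates stay in the ball of radius `2‖y‖`: if `‖x_n‖ ≤ 2‖y‖`, then comparing with
`q 0 = 0` gives `‖q (x_n)‖ ≤ K ‖x_n‖² ≤ 4K ‖y‖² ≤ C ‖y‖² ≤ ‖y‖ / 2`, so
`‖x_{n+1}‖ ≤ 3/2 ‖y‖`. On that ball `q` is Lipschitz with constant `4K ‖y‖ ≤ C ‖y‖`, so each
increment of the iteration is at most `C ‖y‖` times the previous one, and the first is `y`. -/

/-- Geometric decay of the increments of the iteration `x₀ = 0`, `x_{n+1} = y - q (x_n)`:
for `C = max (4K) 1` and `‖y‖ ≤ 1/(2C)`, one has `‖x_k - x_{k-1}‖ ≤ C^(k-1) ‖y‖^k`. -/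
theorem increments_geometric_decay
    {B : Type*} [NormedAddCommGroup B] [NormedSpace ℝ B] [CompleteSpace B]
    (q : B → B) (hq_cont : Continuous q) (hq0 : q 0 = 0)
    (K : ℝ) (hK : 0 < K)
    (hq : ∀ x₁ x₂ : B, ‖q x₁ - q x₂‖ ≤ K * (‖x₁‖ + ‖x₂‖) * ‖x₁ - x₂‖)
    (C : ℝ) (hC : C = max (4 * K) 1)
    (y : B) (hy : ‖y‖ ≤ 1 / (2 * C))
    (x : ℕ → B) (hx0 : x 0 = 0) (hxs : ∀ n : ℕ, x (n + 1) = y - q (x n)) :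
    ∀ k : ℕ, 1 ≤ k → ‖x k - x (k - 1)‖ ≤ C ^ (k - 1) * ‖y‖ ^ k := by
  have hC4 : 4 * K ≤ C := hC ▸ le_max_left _ _
  have hC0 : 0 < C := by linarith
  have hy0 : 0 ≤ ‖y‖ := norm_nonneg y
  have hCy : C * ‖y‖ ≤ 1 / 2 := by
    rw [le_div_iff₀ (by positivity)] at hy
    linarith
  have hbound : ∀ n, ‖x n‖ ≤ 2 * ‖y‖ := by
    intro n
    induction n with
    | zero => simp [hx0]
    | succ n ih =>
      have hqn : ‖q (x n)‖ ≤ ‖y‖ / 2 := calc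
        ‖q (x n)‖ ≤ K * ‖x n‖ * ‖x n‖ := by simpa [hq0] using hq (x n) 0
        _ ≤ K * (2 * ‖y‖) * (2 * ‖y‖) := by gcongr
        _ = 4 * K * ‖y‖ * ‖y‖ := by ring
        _ ≤ C * ‖y‖ * ‖y‖ := by gcongr
        _ ≤ 1 / 2 * ‖y‖ := by gcongr
        _ = ‖y‖ / 2 := by ring
      rw [hxs]
      linarith [norm_sub_le y (q (x n))]
  intro k hk
  induction k, hk using Nat.le_induction with
  | base => simp [hxs 0, hx0, hq0]
  | succ k hk ih =>
    obtain ⟨m, rfl⟩ : ∃ m, k = m + 1 := ⟨k - 1, by omega⟩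
    simp only [Nat.add_sub_cancel] at ih ⊢
    have hdiff : x (m + 1 + 1) - x (m + 1) = q (x m) - q (x (m + 1)) := by
      rw [hxs (m + 1), hxs m]
      abel
    calc ‖x (m + 1 + 1) - x (m + 1)‖
        ≤ K * (‖x m‖ + ‖x (m + 1)‖) * ‖x (m + 1) - x m‖ := by
          rw [hdiff, norm_sub_rev (x (m + 1))]
          exact hq _ _
      _ ≤ K * (2 * ‖y‖ + 2 * ‖y‖) * ‖x (m + 1) - x m‖ := by
          gcongr <;> exact hbound _
      _ = 4 * K * ‖y‖ * ‖x (m + 1) - x m‖ := by ring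
      _ ≤ C * ‖y‖ * (C ^ m * ‖y‖ ^ (m + 1)) := by gcongr
      _ = C ^ (m + 1) * ‖y‖ ^ (m + 1 + 1) := by ring
end

section
/- Let B be a Banach space, let p be a seminorm on B, and let q : B → B be a continuous map with q(0) = 0 such that for some constant K > 0 and all x₁, x₂ ∈ B one has both ‖q(x₁) − q(x₂)‖ ≤ K(‖x₁‖ + ‖x₂‖)·‖x₁ − x₂‖ and p(q(x₁) − q(x₂)) ≤ K(‖x₁‖ + ‖x₂‖)·p(x₁ − x₂). Set C := max(4K, 1). Fix y ∈ B with ‖y‖ ≤ 1/(2C) and define x₀ = 0 and x_{n+1} = y − q(x_n) for n ≥ 0. Then for every k ≥ 1 one has p(x_k − x_{k−1}) ≤ C^{k−1}·‖y‖^{k−1}·p(y), and consequently the sum over all k ≥ 1 of p(x_k − x_{k−1}) is at most 2·p(y). -/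
/-!
Since `4K ≤ C` and `C‖y‖ ≤ 1/2`, the ball of radius `2‖y‖` contains every iterate:
`‖y - q x‖ ≤ ‖y‖ + 4K‖y‖² ≤ 2‖y‖` when `‖x‖ ≤ 2‖y‖`. On that ball `q` contracts `p` by the factor
`4K‖y‖ ≤ C‖y‖`, so the increments decay geometrically with ratio `C‖y‖ ≤ 1/2`, and comparison
with `∑ (1/2)ⁿ p y = 2 p y` bounds (and gives the convergence of) their sum.
-/

/-- Seminorm version of the geometric decay estimate: if `q` additionally contracts with
respect to a seminorm `p`, then `p (x_k - x_{k-1}) ≤ C^(k-1) ‖y‖^(k-1) p y`, and the sum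
over all `k ≥ 1` of these increments is at most `2 p y`. -/
theorem seminorm_increments_bound
    {B : Type*} [NormedAddCommGroup B] [NormedSpace ℝ B] [CompleteSpace B]
    (p : Seminorm ℝ B)
    (q : B → B) (hq_cont : Continuous q) (hq0 : q 0 = 0)
    (K : ℝ) (hK : 0 < K)
    (hq : ∀ x₁ x₂ : B, ‖q x₁ - q x₂‖ ≤ K * (‖x₁‖ + ‖x₂‖) * ‖x₁ - x₂‖)
    (hqp : ∀ x₁ x₂ : B, p (q x₁ - q x₂) ≤ K * (‖x₁‖ + ‖x₂‖) * p (x₁ - x₂))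
    (C : ℝ) (hC : C = max (4 * K) 1)
    (y : B) (hy : ‖y‖ ≤ 1 / (2 * C))
    (x : ℕ → B) (hx0 : x 0 = 0) (hxs : ∀ n : ℕ, x (n + 1) = y - q (x n)) :
    (∀ k : ℕ, 1 ≤ k → p (x k - x (k - 1)) ≤ C ^ (k - 1) * ‖y‖ ^ (k - 1) * p y) ∧
    (∑' k : ℕ, p (x (k + 1) - x k)) ≤ 2 * p y := by
  have hC1 : 1 ≤ C := hC ▸ le_max_right _ _
  have hC4 : 4 * K ≤ C := hC ▸ le_max_left _ _
  have hCy : C * ‖y‖ ≤ 1 / 2 := by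
    rw [le_div_iff₀ (by linarith)] at hy
    linarith
  have hy0 := norm_nonneg y
  have hKy : K * (2 * ‖y‖ + 2 * ‖y‖) ≤ C * ‖y‖ := by nlinarith
  have hnorm : ∀ n, ‖x n‖ ≤ 2 * ‖y‖ := by
    intro n
    induction n with
    | zero => simp [hx0]
    | succ n ih =>
      have hqn : ‖q (x n)‖ ≤ K * ‖x n‖ * ‖x n‖ := by simpa [hq0] using hq (x n) 0
      have hsq : K * ‖x n‖ * ‖x n‖ ≤ K * (2 * ‖y‖) * (2 * ‖y‖) := by gcongr
      have htri := norm_sub_le y (q (x n))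
      rw [hxs]
      nlinarith
  have hinc : ∀ n, p (x (n + 1) - x n) ≤ C ^ n * ‖y‖ ^ n * p y := by
    intro n
    induction n with
    | zero => simp [hxs, hx0, hq0]
    | succ n ih =>
      have hstep : x (n + 1 + 1) - x (n + 1) = -(q (x (n + 1)) - q (x n)) := by
        rw [hxs (n + 1), hxs n]
        abel
      rw [hstep, map_neg_eq_map]
      calc p (q (x (n + 1)) - q (x n))
          ≤ K * (‖x (n + 1)‖ + ‖x n‖) * p (x (n + 1) - x n) := hqp _ _
        _ ≤ K * (2 * ‖y‖ + 2 * ‖y‖) * p (x (n + 1) - x n) := by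
            gcongr
            exacts [hnorm _, hnorm _]
        _ ≤ C * ‖y‖ * (C ^ n * ‖y‖ ^ n * p y) := by gcongr
        _ = C ^ (n + 1) * ‖y‖ ^ (n + 1) * p y := by ring
  refine ⟨fun k hk => ?_, ?_⟩
  · obtain ⟨n, rfl⟩ := Nat.exists_eq_add_of_le' hk
    simpa using hinc n
  · have hgeom : ∀ n, p (x (n + 1) - x n) ≤ (1 / 2) ^ n * p y := fun n => by
      refine (hinc n).trans ?_
      rw [← mul_pow]
      gcongr
    have hmaj : HasSum (fun n : ℕ => (1 / 2 : ℝ) ^ n * p y) (2 * p y) :=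
      hasSum_geometric_two.mul_right _
    have hsum := hmaj.summable.of_nonneg_of_le (fun n => apply_nonneg p _) hgeom
    exact hasSum_le hgeom hsum.hasSum hmaj
end
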